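/- Let (λ_k, z_k, z̃_k, ε_k) be NE-HPE sequences for T with parameter σ, distance generating function w ∈ 𝒟_Z(m,M), and initial point z₀ ∈ Z, and set r_k := (1/λ_k)(∇w(z_{k−1}) − ∇w(z_k)), τ := √2·M/√m, and θ_i := max{ λ_i²‖r_i‖_*² / (τ²(1+√σ)²), λ_i ε_i / σ } for i ≥ 1 (with the second term interpreted as 0 when σ = 0 and ε_i = 0). Then (1−σ) Σ_{i=1}^{k} θ_i ≤ (dw)_0 for every k ≥ 1, where (dw)_0 := inf{(dw)_{z₀}(z*) : 0 ∈ T(z*)}. -/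

import Mathlib

open RealInnerProductSpace Filter

/-- The dual (extended) seminorm of a seminorm `p`:
`‖v‖_* = sup { ⟪v, z⟫ : p z ≤ 1 }`, valued in `[-∞, ∞]`. -/
noncomputable def dualSN {E : Type*} [NormedAddCommGroup E] [InnerProductSpace ℝ E]
    (p : E → ℝ) (v : E) : EReal :=
  ⨆ z : {z : E // p z ≤ 1}, ((⟪v, z.1⟫ : ℝ) : EReal)

/-- The Bregman distance `(dw)_z(z') := w(z') - w(z) - ⟪∇w(z), z' - z⟫`
associated with `w`, whose gradient is `gw`. -/
noncomputable def breg {E : Type*} [NormedAddCommGroup E] [InnerProductSpace ℝ E]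
    (w : E → ℝ) (gw : E → E) (z z' : E) : ℝ :=
  w z' - w z - ⟪gw z, z' - z⟫

/-- `w ∈ 𝒟_Z(m, M)`: `w` is differentiable on `Z` with gradient `gw`, is `m`-strongly
convex with respect to the seminorm `p` on `Z`, and `gw` is `M`-Lipschitz from `p` to the
dual seminorm of `p` on `Z`. -/
structure IsDGF {E : Type*} [NormedAddCommGroup E] [InnerProductSpace ℝ E]
    [FiniteDimensional ℝ E]
    (Z : Set E) (p : Seminorm ℝ E) (m M : ℝ) (w : E → ℝ) (gw : E → E) : Prop where
  diff : ∀ z ∈ Z, HasGradientAt w (gw z) z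
  strconv : ∀ z ∈ Z, ∀ z' ∈ Z, m / 2 * (p (z - z'))^2 ≤ w z' - w z - ⟪gw z, z' - z⟫
  lips : ∀ z ∈ Z, ∀ z' ∈ Z, dualSN ⇑p (gw z - gw z') ≤ ((M * p (z - z') : ℝ) : EReal)

/-- A set-valued operator `T : E ⇉ E` is monotone. -/
def MonoOp {E : Type*} [NormedAddCommGroup E] [InnerProductSpace ℝ E]
    (T : E → Set E) : Prop :=
  ∀ z z' t t' : E, t ∈ T z → t' ∈ T z' → 0 ≤ ⟪z - z', t - t'⟫

/-- A set-valued operator `T : E ⇉ E` is maximal monotone. -/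
def MaxMonoOp {E : Type*} [NormedAddCommGroup E] [InnerProductSpace ℝ E]
    (T : E → Set E) : Prop :=
  MonoOp T ∧ ∀ T' : E → Set E, MonoOp T' → (∀ z, T z ⊆ T' z) → T' = T

/-- The ε-enlargement `T^[ε]` of a monotone operator `T`. -/
def epsEnl {E : Type*} [NormedAddCommGroup E] [InnerProductSpace ℝ E]
    (T : E → Set E) (ε : ℝ) (z : E) : Set E :=
  {t | ∀ z' t' : E, t' ∈ T z' → -ε ≤ ⟪t - t', z - z'⟫}

/-- NE-HPE sequences `(λ_k, z_k, z̃_k, ε_k)` for `T`, with parameter `σ`, distance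
generating function `w` (with gradient `gw`) and initial point `z_0 = zs 0 ∈ Z`. -/
structure NEHPE {E : Type*} [NormedAddCommGroup E] [InnerProductSpace ℝ E]
    (Z : Set E) (w : E → ℝ) (gw : E → E) (T : E → Set E) (σ : ℝ)
    (lam : ℕ → ℝ) (zs : ℕ → E) (zt : ℕ → E) (ε : ℕ → ℝ) : Prop where
  lam_pos : ∀ k, 1 ≤ k → 0 < lam k
  zs_mem : ∀ k, zs k ∈ Z
  zt_mem : ∀ k, 1 ≤ k → zt k ∈ Z
  eps_nonneg : ∀ k, 1 ≤ k → 0 ≤ ε k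
  incl : ∀ k, 1 ≤ k → (1 / lam k) • (gw (zs (k-1)) - gw (zs k)) ∈ epsEnl T (ε k) (zt k)
  err : ∀ k, 1 ≤ k →
    breg w gw (zs k) (zt k) + lam k * ε k ≤ σ * breg w gw (zs (k-1)) (zt k)

/-!
By the three-point identity, each step of an NE-HPE sequence lowers the Bregman distance to every
zero `z*` of `T` by at least `(1 - σ) (dw)_{z_{k-1}}(z̃_k)`: the inner product left over is
`λ_k ⟪r_k, z̃_k - z*⟫ ≥ -λ_k ε_k`, which the error condition absorbs. Telescoping bounds
`(1 - σ) Σ (dw)_{z_{i-1}}(z̃_i)` by `(dw)_0`. Moreover `θ_i ≤ (dw)_{z_{i-1}}(z̃_i)`: strong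
convexity and the error condition place both `z_{i-1}` and `z_i` close to `z̃_i`, hence close to
each other, and the Lipschitz bound on the gradient controls `λ_i ‖r_i‖_*` by their distance.
-/

theorem ereal_coe_sum {ι : Type*} (s : Finset ι) (f : ι → ℝ) :
    ((∑ i ∈ s, f i : ℝ) : EReal) = ∑ i ∈ s, (f i : EReal) :=
  map_sum (⟨⟨Real.toEReal, EReal.coe_zero⟩, EReal.coe_add⟩ : ℝ →+ EReal) f s

theorem mul_sq_map_sub_le_of_mul_sq_map_sub_le {F G : Type*} [AddGroup G] [FunLike F G ℝ]
    [AddGroupSeminormClass F G ℝ] (p : F) {x y u : G} {μ σ a : ℝ} (hμ : 0 ≤ μ) (hσ : 0 ≤ σ)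
    (hx : μ * p (x - u) ^ 2 ≤ a) (hy : μ * p (y - u) ^ 2 ≤ σ * a) :
    μ * p (x - y) ^ 2 ≤ (1 + √σ) ^ 2 * a := by
  have ha : 0 ≤ a := le_trans (by positivity) hx
  have hx' : √μ * p (x - u) ≤ √a :=
    Real.le_sqrt_of_sq_le (by rwa [mul_pow, Real.sq_sqrt hμ])
  have hy' : √μ * p (y - u) ≤ √σ * √a := by
    rw [← Real.sqrt_mul hσ]
    exact Real.le_sqrt_of_sq_le (by rwa [mul_pow, Real.sq_sqrt hμ])
  have hxy : √μ * p (x - y) ≤ (1 + √σ) * √a :=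
    calc √μ * p (x - y) ≤ √μ * (p (x - u) + p (u - y)) := by
          gcongr
          exact le_map_sub_add_map_sub p x u y
      _ = √μ * p (x - u) + √μ * p (y - u) := by rw [mul_add, map_sub_rev p u y]
      _ ≤ √a + √σ * √a := add_le_add hx' hy'
      _ = (1 + √σ) * √a := by ring
  calc μ * p (x - y) ^ 2 = (√μ * p (x - y)) ^ 2 := by rw [mul_pow, Real.sq_sqrt hμ]
    _ ≤ ((1 + √σ) * √a) ^ 2 := by gcongr
    _ = (1 + √σ) ^ 2 * a := by rw [mul_pow, Real.sq_sqrt ha]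

section InnerProductSpace

variable {E : Type*} [NormedAddCommGroup E] [InnerProductSpace ℝ E]

theorem inner_le_dualSN {p : E → ℝ} (v : E) {z : E} (hz : p z ≤ 1) :
    ((⟪v, z⟫ : ℝ) : EReal) ≤ dualSN p v :=
  le_iSup (fun z : {z : E // p z ≤ 1} ↦ ((⟪v, z.1⟫ : ℝ) : EReal)) ⟨z, hz⟩

theorem dualSN_nonneg {p : E → ℝ} (hp : p 0 ≤ 1) (v : E) : 0 ≤ dualSN p v := by
  simpa only [inner_zero_right, EReal.coe_zero] using inner_le_dualSN v hp

theorem dualSN_smul_le (p : E → ℝ) {c : ℝ} (hc : 0 ≤ c) (v : E) :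
    dualSN p (c • v) ≤ c * dualSN p v := by
  refine iSup_le fun z ↦ ?_
  rw [real_inner_smul_left, EReal.coe_mul]
  exact mul_le_mul_of_nonneg_left (inner_le_dualSN v z.2) (EReal.coe_nonneg.2 hc)

theorem dualSN_smul (p : E → ℝ) {c : ℝ} (hc : 0 < c) (v : E) :
    dualSN p (c • v) = c * dualSN p v := by
  refine (dualSN_smul_le p hc.le v).antisymm ?_
  calc (c : EReal) * dualSN p v = c * dualSN p (c⁻¹ • c • v) := by rw [inv_smul_smul₀ hc.ne']
    _ ≤ c * ((c⁻¹ : ℝ) * dualSN p (c • v)) :=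
        mul_le_mul_of_nonneg_left (dualSN_smul_le p (inv_nonneg.2 hc.le) _)
          (EReal.coe_nonneg.2 hc.le)
    _ = dualSN p (c • v) := by
        rw [← mul_assoc, ← EReal.coe_mul, mul_inv_cancel₀ hc.ne', EReal.coe_one, one_mul]

theorem sq_dualSN_le_of_mul_sq_map_sub_le (p : Seminorm ℝ E) {v x y u : E} {M μ σ a : ℝ}
    (hμ : 0 < μ) (hσ : 0 ≤ σ) (hv : dualSN p v ≤ ((M * p (x - y) : ℝ) : EReal))
    (hx : μ * p (x - u) ^ 2 ≤ a) (hy : μ * p (y - u) ^ 2 ≤ σ * a) :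
    dualSN p v ^ 2 ≤ ((M ^ 2 / μ * (1 + √σ) ^ 2 * a : ℝ) : EReal) := by
  have hv0 : 0 ≤ dualSN p v := dualSN_nonneg (by simp only [map_zero, zero_le_one]) v
  calc dualSN p v ^ 2 ≤ ((M * p (x - y) : ℝ) : EReal) ^ 2 := pow_le_pow_left₀ hv0 hv 2
    _ = ((M ^ 2 / μ * (μ * p (x - y) ^ 2) : ℝ) : EReal) := by
        rw [← EReal.coe_pow]
        congr 1
        field_simp
    _ ≤ ((M ^ 2 / μ * ((1 + √σ) ^ 2 * a) : ℝ) : EReal) := by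
        refine EReal.coe_le_coe_iff.2 (mul_le_mul_of_nonneg_left ?_ (by positivity))
        exact mul_sq_map_sub_le_of_mul_sq_map_sub_le p hμ.le hσ hx hy
    _ = ((M ^ 2 / μ * (1 + √σ) ^ 2 * a : ℝ) : EReal) := by rw [mul_assoc]

theorem breg_sub_breg (w : E → ℝ) (gw : E → E) (x y u z : E) :
    breg w gw x z - breg w gw y z
      = breg w gw x u - breg w gw y u + ⟪gw x - gw y, u - z⟫ := by
  simp only [breg, inner_sub_left, inner_sub_right]
  ring

end InnerProductSpace

namespace NEHPE

variable {E : Type*} [NormedAddCommGroup E] [InnerProductSpace ℝ E]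

/-- The residual `r_k = (1 / λ_k) (∇w(z_{k-1}) - ∇w(z_k))` of NE-HPE sequences, an element of the
`ε_k`-enlargement of the operator at `z̃_k`. -/
noncomputable def residual (gw : E → E) (lam : ℕ → ℝ) (zs : ℕ → E) (k : ℕ) : E :=
  (1 / lam k) • (gw (zs (k - 1)) - gw (zs k))

/-- The quantity `θ_k = max {λ_k² ‖r_k‖_*² / (τ² (1 + √σ)²), λ_k ε_k / σ}`, which measures how far
the `k`-th iterate is from solving the inclusion. The second entry is `0` when `σ = 0`, by the
convention `x / 0 = 0`. -/
noncomputable def theta (p : E → ℝ) (gw : E → E) (τ σ : ℝ) (lam : ℕ → ℝ) (zs : ℕ → E)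
    (ε : ℕ → ℝ) (k : ℕ) : EReal :=
  max
    (((lam k ^ 2 : ℝ) : EReal) * dualSN p (residual gw lam zs k) ^ 2
      / ((τ ^ 2 * (1 + √σ) ^ 2 : ℝ) : EReal))
    ((lam k * ε k / σ : ℝ) : EReal)

theorem sq_mul_sq_dualSN_residual (p : E → ℝ) (gw : E → E) {lam : ℕ → ℝ} (zs : ℕ → E) {k : ℕ}
    (hlam : 0 < lam k) :
    ((lam k ^ 2 : ℝ) : EReal) * dualSN p (residual gw lam zs k) ^ 2
      = dualSN p (gw (zs (k - 1)) - gw (zs k)) ^ 2 := by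
  rw [EReal.coe_pow, ← mul_pow, ← dualSN_smul p hlam, residual, one_div,
    smul_inv_smul₀ hlam.ne']

variable {Z : Set E} {w : E → ℝ} {gw : E → E} {T : E → Set E} {σ : ℝ} {lam : ℕ → ℝ}
  {zs zt : ℕ → E} {ε : ℕ → ℝ} {k : ℕ}

theorem breg_le (h : NEHPE Z w gw T σ lam zs zt ε) (hk : 1 ≤ k) :
    breg w gw (zs k) (zt k) ≤ σ * breg w gw (zs (k - 1)) (zt k) :=
  (le_add_of_nonneg_right (mul_nonneg (h.lam_pos k hk).le (h.eps_nonneg k hk))).trans (h.err k hk)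

theorem lam_mul_eps_le (h : NEHPE Z w gw T σ lam zs zt ε)
    (hbreg : ∀ x ∈ Z, ∀ y ∈ Z, 0 ≤ breg w gw x y) (hk : 1 ≤ k) :
    lam k * ε k ≤ σ * breg w gw (zs (k - 1)) (zt k) :=
  (le_add_of_nonneg_left (hbreg _ (h.zs_mem k) _ (h.zt_mem k hk))).trans (h.err k hk)

theorem neg_lam_mul_eps_le_inner (h : NEHPE Z w gw T σ lam zs zt ε) {z : E} (hz : 0 ∈ T z)
    (hk : 1 ≤ k) :
    -(lam k * ε k) ≤ ⟪gw (zs (k - 1)) - gw (zs k), zt k - z⟫ := by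
  have hlam := h.lam_pos k hk
  have hincl := h.incl k hk z 0 hz
  rwa [sub_zero, real_inner_smul_left, one_div, inv_mul_eq_div, le_div_iff₀ hlam, neg_mul,
    mul_comm] at hincl

theorem breg_descent (h : NEHPE Z w gw T σ lam zs zt ε) {z : E} (hz : 0 ∈ T z) (hk : 1 ≤ k) :
    (1 - σ) * breg w gw (zs (k - 1)) (zt k) + breg w gw (zs k) z ≤ breg w gw (zs (k - 1)) z := by
  linarith [breg_sub_breg w gw (zs (k - 1)) (zs k) (zt k) z, h.neg_lam_mul_eps_le_inner hz hk,
    h.err k hk]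

theorem sum_breg_add_breg_le (h : NEHPE Z w gw T σ lam zs zt ε) {z : E} (hz : 0 ∈ T z) (k : ℕ) :
    (1 - σ) * ∑ i ∈ Finset.Icc 1 k, breg w gw (zs (i - 1)) (zt i) + breg w gw (zs k) z
      ≤ breg w gw (zs 0) z := by
  induction k with
  | zero => simp
  | succ k ih =>
    have hdescent := h.breg_descent hz (Nat.le_add_left 1 k)
    rw [Nat.add_sub_cancel] at hdescent
    rw [Finset.sum_Icc_succ_top (Nat.le_add_left 1 k), mul_add, Nat.add_sub_cancel]
    linarith

theorem sum_breg_le_sInf (h : NEHPE Z w gw T σ lam zs zt ε)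
    (hbreg : ∀ x ∈ Z, ∀ y ∈ Z, 0 ≤ breg w gw x y)
    (hdom : ∀ z, 0 ∈ T z → z ∈ Z) (hsol : ∃ z, 0 ∈ T z) (k : ℕ) :
    (1 - σ) * ∑ i ∈ Finset.Icc 1 k, breg w gw (zs (i - 1)) (zt i)
      ≤ sInf (breg w gw (zs 0) '' {z | 0 ∈ T z}) := by
  refine le_csInf (Set.Nonempty.image _ hsol) ?_
  rintro _ ⟨z, hz, rfl⟩
  linarith [h.sum_breg_add_breg_le hz k, hbreg _ (h.zs_mem k) z (hdom z hz)]

theorem theta_le_breg (h : NEHPE Z w gw T σ lam zs zt ε) {p : Seminorm ℝ E} {m M : ℝ}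
    (hm : 0 < m) (hM : 0 < M) (hσ : 0 ≤ σ)
    (hconv : ∀ x ∈ Z, ∀ y ∈ Z, m / 2 * p (x - y) ^ 2 ≤ breg w gw x y)
    (hlips : ∀ x ∈ Z, ∀ y ∈ Z, dualSN p (gw x - gw y) ≤ ((M * p (x - y) : ℝ) : EReal))
    (hk : 1 ≤ k) :
    theta p gw (√2 * M / √m) σ lam zs ε k ≤ ((breg w gw (zs (k - 1)) (zt k) : ℝ) : EReal) := by
  have hbreg : ∀ x ∈ Z, ∀ y ∈ Z, 0 ≤ breg w gw x y :=
    fun x hx y hy ↦ le_trans (by positivity) (hconv x hx y hy)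
  have hz := h.zs_mem (k - 1)
  have hz' := h.zs_mem k
  have hzt := h.zt_mem k hk
  refine max_le ?_ (EReal.coe_le_coe_iff.2 ?_)
  · have hden : 0 < (√2 * M / √m) ^ 2 * (1 + √σ) ^ 2 := by positivity
    have hτ : (√2 * M / √m) ^ 2 = M ^ 2 / (m / 2) := by
      rw [div_pow, mul_pow, Real.sq_sqrt zero_le_two, Real.sq_sqrt hm.le]
      field_simp
    rw [EReal.div_le_iff_le_mul (EReal.coe_pos.2 hden) (EReal.coe_ne_top _), ← EReal.coe_mul,
      sq_mul_sq_dualSN_residual _ _ _ (h.lam_pos k hk), hτ]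
    exact sq_dualSN_le_of_mul_sq_map_sub_le p (half_pos hm) hσ (hlips _ hz _ hz') (hconv _ hz _ hzt)
      ((hconv _ hz' _ hzt).trans (h.breg_le hk))
  · refine div_le_of_le_mul₀ hσ (hbreg _ hz _ hzt) ?_
    rw [mul_comm (breg _ _ _ _)]
    exact h.lam_mul_eps_le hbreg hk

end NEHPE

theorem stmt5_general
    {E : Type*} [NormedAddCommGroup E] [InnerProductSpace ℝ E] [CompleteSpace E]
    (Z : Set E) (p : Seminorm ℝ E) (m M : ℝ) (hm : 0 < m) (hM : 0 < M)
    (w : E → ℝ) (gw : E → E) (hgrad : ∀ z ∈ Z, HasGradientAt w (gw z) z)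
    (hconv : ∀ x ∈ Z, ∀ y ∈ Z, m / 2 * p (x - y) ^ 2 ≤ breg w gw x y)
    (hlips : ∀ x ∈ Z, ∀ y ∈ Z, dualSN p (gw x - gw y) ≤ ((M * p (x - y) : ℝ) : EReal))
    (T : E → Set E) (hdom : ∀ z, 0 ∈ T z → z ∈ Z) (hsol : ∃ z, 0 ∈ T z)
    (σ : ℝ) (hσ0 : 0 ≤ σ) (hσ1 : σ ≤ 1)
    (lam : ℕ → ℝ) (zs zt : ℕ → E) (ε : ℕ → ℝ) (hseq : NEHPE Z w gw T σ lam zs zt ε) (k : ℕ) :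
    ((1 - σ : ℝ) : EReal) * ∑ i ∈ Finset.Icc 1 k, NEHPE.theta p gw (√2 * M / √m) σ lam zs ε i
      ≤ ((sInf (breg w gw (zs 0) '' {z | 0 ∈ T z}) : ℝ) : EReal) := by
  have hbreg : ∀ x ∈ Z, ∀ y ∈ Z, 0 ≤ breg w gw x y :=
    fun x hx y hy ↦ le_trans (by positivity) (hconv x hx y hy)
  have hsum : ∑ i ∈ Finset.Icc 1 k, NEHPE.theta p gw (√2 * M / √m) σ lam zs ε i
      ≤ ((∑ i ∈ Finset.Icc 1 k, breg w gw (zs (i - 1)) (zt i) : ℝ) : EReal) := by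
    rw [ereal_coe_sum]
    exact Finset.sum_le_sum fun i hi ↦
      hseq.theta_le_breg hm hM hσ0 hconv hlips (Finset.mem_Icc.1 hi).1
  calc _ ≤ ((1 - σ : ℝ) : EReal)
          * ((∑ i ∈ Finset.Icc 1 k, breg w gw (zs (i - 1)) (zt i) : ℝ) : EReal) :=
        mul_le_mul_of_nonneg_left hsum (EReal.coe_nonneg.2 (sub_nonneg.2 hσ1))
    _ ≤ _ := by
        rw [← EReal.coe_mul, EReal.coe_le_coe_iff]
        exact hseq.sum_breg_le_sInf hbreg hdom hsol k

/-- With τ := √2·M/√m and θ_i := max{λ_i²‖r_i‖_*²/(τ²(1+√σ)²), λ_iε_i/σ}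
(the second term being 0 when σ = 0 and ε_i = 0, matching the convention x/0 = 0),
one has (1−σ) Σ_{i=1}^k θ_i ≤ (dw)_0 for every k ≥ 1. -/
theorem stmt5
    {E : Type*} [NormedAddCommGroup E] [InnerProductSpace ℝ E] [FiniteDimensional ℝ E]
    (Z : Set E) (p : Seminorm ℝ E) (m M : ℝ) (hm : 0 < m) (hmM : m ≤ M)
    (w : E → ℝ) (gw : E → E) (hw : IsDGF Z p m M w gw)
    (T : E → Set E) (hT : MaxMonoOp T)
    (hdom : ∀ z, (T z).Nonempty → z ∈ Z) (hsol : ∃ z, 0 ∈ T z)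
    (σ : ℝ) (hσ0 : 0 ≤ σ) (hσ1 : σ ≤ 1)
    (lam : ℕ → ℝ) (zs zt : ℕ → E) (ε : ℕ → ℝ)
    (hseq : NEHPE Z w gw T σ lam zs zt ε)
    (r : ℕ → E) (hr : ∀ k, r k = (1 / lam k) • (gw (zs (k - 1)) - gw (zs k)))
    (τ : ℝ) (hτ : τ = Real.sqrt 2 * M / Real.sqrt m)
    (dw0 : ℝ) (hdw0 : dw0 = sInf (breg w gw (zs 0) '' {z | (0 : E) ∈ T z}))
    (θf : ℕ → EReal)
    (hθf : ∀ i, θf i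
      = max
          (((lam i ^ 2 : ℝ) : EReal) * (dualSN ⇑p (r i))^2
            / ((τ ^ 2 * (1 + Real.sqrt σ) ^ 2 : ℝ) : EReal))
          ((lam i * ε i / σ : ℝ) : EReal)) :
    ∀ k, 1 ≤ k →
      ((1 - σ : ℝ) : EReal) * ∑ i ∈ Finset.Icc 1 k, θf i ≤ ((dw0 : ℝ) : EReal) := by
  obtain rfl : r = NEHPE.residual gw lam zs := funext hr
  obtain rfl : θf = NEHPE.theta p gw τ σ lam zs ε := funext hθf
  subst hτ hdw0
  exact fun k _ ↦ stmt5_general Z p m M hm (hm.trans_le hmM) w gw hw.diff hw.strconv hw.lips T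
    (fun z hz ↦ hdom z ⟨0, hz⟩) hsol σ hσ0 hσ1 lam zs zt ε hseq k
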